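/- For p ∈ [0,1) and fixed convex bodies K, L in ℝⁿ with 0 in their interiors, the function λ ↦ vol((1−λ)K +ₚ λL) is continuously differentiable on [0,1], with derivative ∫_{Sⁿ⁻¹} ((h_L^p − h_K^p)/p)·((1−λ)h_K^p + λh_L^p)^{(1−p)/p} dS_{K_λ} for p > 0 and ∫_{Sⁿ⁻¹} h_K^{1−λ}h_L^λ·log(h_L/h_K) dS_{K_λ} for p = 0, where K_λ = (1−λ)K +ₚ λL. -/

import Mathlib

open Real Set MeasureTheory
open scoped RealInnerProductSpace Pointwise

/-- The support function of a set `K` at `u`. -/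
noncomputable def suppFn {n : ℕ} (K : Set (EuclideanSpace ℝ (Fin n)))
    (u : EuclideanSpace ℝ (Fin n)) : ℝ :=
  sSup ((fun x => ⟪x, u⟫) '' K)

open Classical in
/-- The `p`-mean `(1-λ)h_K +ₚ λh_L` (geometric mean for `p = 0`). -/
noncomputable def pMean {n : ℕ} (p : ℝ) (K L : Set (EuclideanSpace ℝ (Fin n)))
    (lam : ℝ) (u : EuclideanSpace ℝ (Fin n)) : ℝ :=
  if p = 0 then suppFn K u ^ (1 - lam) * suppFn L u ^ lam
  else ((1 - lam) * suppFn K u ^ p + lam * suppFn L u ^ p) ^ (1 / p)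

/-- The `L^p`-combination `(1-λ)K +ₚ λL` as the Wulff shape of the `p`-mean. -/
noncomputable def pComb {n : ℕ} (p : ℝ) (K L : Set (EuclideanSpace ℝ (Fin n)))
    (lam : ℝ) : Set (EuclideanSpace ℝ (Fin n)) :=
  ⋂ u ∈ Metric.sphere (0 : EuclideanSpace ℝ (Fin n)) 1, {x | ⟪x, u⟫ ≤ pMean p K L lam u}

abbrev Eu (n : ℕ) := EuclideanSpace ℝ (Fin n)

/-- Wulff shape -/
def Wu {n : ℕ} (f : Eu n → ℝ) : Set (Eu n) :=
  ⋂ u ∈ Metric.sphere (0 : Eu n) 1, {x | ⟪x, u⟫ ≤ f u}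

/-- gauge of the Wulff shape -/
noncomputable def Ga {n : ℕ} (f : Eu n → ℝ) (x : Eu n) : ℝ :=
  sSup ((fun u => ⟪x, u⟫ / f u) '' Metric.sphere (0 : Eu n) 1)

/-- unit normal -/
noncomputable def nu {n : ℕ} (f : Eu n → ℝ) (x : Eu n) : Eu n :=
  ‖gradient (Ga f) x‖⁻¹ • gradient (Ga f) x

/-- good function with bounds -/
structure Good {n : ℕ} (f : Eu n → ℝ) (c C : ℝ) : Prop where
  npos : 0 < n
  cpos : 0 < c
  cont : ContinuousOn f {0}ᶜ
  lb : ∀ u ∈ Metric.sphere (0 : Eu n) 1, c ≤ f u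
  ub : ∀ u ∈ Metric.sphere (0 : Eu n) 1, f u ≤ C

section basic
variable {n : ℕ} {f : Eu n → ℝ} {c C : ℝ}

lemma sphere_ne (hn : 0 < n) : (Metric.sphere (0 : Eu n) 1).Nonempty := by
  have : Nonempty (Fin n) := ⟨⟨0, hn⟩⟩
  have : Nontrivial (Eu n) := inferInstance
  exact NormedSpace.sphere_nonempty.2 zero_le_one

lemma sphere_sub : Metric.sphere (0 : Eu n) 1 ⊆ {0}ᶜ := by
  intro u hu h
  simp only [mem_singleton_iff] at h
  simp [h] at hu

lemma Good.contS (h : Good f c C) : ContinuousOn f (Metric.sphere (0 : Eu n) 1) :=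
  h.cont.mono sphere_sub

lemma Good.pos (h : Good f c C) {u : Eu n} (hu : u ∈ Metric.sphere (0 : Eu n) 1) : 0 < f u :=
  h.cpos.trans_le (h.lb u hu)

lemma Good.Cpos (h : Good f c C) : 0 < C := by
  obtain ⟨u, hu⟩ := sphere_ne h.npos
  exact (h.pos hu).trans_le (h.ub u hu)

lemma Good.exists_max (h : Good f c C) (x : Eu n) :
    ∃ u ∈ Metric.sphere (0 : Eu n) 1, Ga f x = ⟪x, u⟫ / f u ∧
      ∀ v ∈ Metric.sphere (0 : Eu n) 1, ⟪x, v⟫ / f v ≤ Ga f x := by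
  have hc : ContinuousOn (fun u => ⟪x, u⟫ / f u) (Metric.sphere (0 : Eu n) 1) :=
    ContinuousOn.div (by fun_prop) h.contS (fun u hu => (h.pos hu).ne')
  obtain ⟨u, hu, hm⟩ := (isCompact_sphere (0 : Eu n) 1).exists_isMaxOn (sphere_ne h.npos) hc
  have : Ga f x = ⟪x, u⟫ / f u := by
    apply IsGreatest.csSup_eq
    refine ⟨⟨u, hu, rfl⟩, ?_⟩
    rintro _ ⟨v, hv, rfl⟩
    exact hm hv
  refine ⟨u, hu, this, fun v hv => ?_⟩
  rw [this]; exact hm hv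

lemma Good.le_Ga (h : Good f c C) (x : Eu n) {v : Eu n} (hv : v ∈ Metric.sphere (0 : Eu n) 1) :
    ⟪x, v⟫ / f v ≤ Ga f x := by
  obtain ⟨u, hu, h1, h2⟩ := h.exists_max x
  exact h2 v hv

lemma Good.Ga_le (h : Good f c C) (x : Eu n) {a : ℝ}
    (ha : ∀ v ∈ Metric.sphere (0 : Eu n) 1, ⟪x, v⟫ / f v ≤ a) : Ga f x ≤ a := by
  obtain ⟨u, hu, h1, h2⟩ := h.exists_max x
  rw [h1]; exact ha u hu

lemma Good.mem_Wu (h : Good f c C) (x : Eu n) : x ∈ Wu f ↔ Ga f x ≤ 1 := by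
  simp only [Wu, mem_iInter, mem_ofPred_eq]
  constructor
  · intro hx
    exact h.Ga_le x fun v hv => (div_le_one (h.pos hv)).2 (hx v hv)
  · intro hx u hu
    exact (div_le_one (h.pos hu)).1 ((h.le_Ga x hu).trans hx)

lemma Good.Ga_smul (h : Good f c C) (x : Eu n) {s : ℝ} (hs : 0 ≤ s) :
    Ga f (s • x) = s * Ga f x := by
  apply le_antisymm
  · apply h.Ga_le
    intro v hv
    rw [real_inner_smul_left, mul_div_assoc]
    exact mul_le_mul_of_nonneg_left (h.le_Ga x hv) hs
  · obtain ⟨u, hu, h1, h2⟩ := h.exists_max x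
    rw [h1, ← mul_div_assoc, ← real_inner_smul_left]
    exact h.le_Ga _ hu

lemma Good.Ga_upper (h : Good f c C) (x : Eu n) : Ga f x ≤ ‖x‖ / c := by
  apply h.Ga_le
  intro v hv
  have h1 : ⟪x, v⟫ ≤ ‖x‖ := by
    have := real_inner_le_norm x v
    rwa [mem_sphere_zero_iff_norm.1 hv, mul_one] at this
  calc ⟪x, v⟫ / f v ≤ ‖x‖ / f v := by
        gcongr
        exact (h.pos hv).le
    _ ≤ ‖x‖ / c := by
        gcongr
        · exact h.cpos
        · exact h.lb v hv

lemma Good.Ga_lower (h : Good f c C) (x : Eu n) : ‖x‖ / C ≤ Ga f x := by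
  by_cases hx : x = 0
  · obtain ⟨u, hu, h1, h2⟩ := h.exists_max x
    rw [h1]; simp [hx]
  · have hn : ‖x‖ ≠ 0 := norm_ne_zero_iff.2 hx
    have hv : ‖x‖⁻¹ • x ∈ Metric.sphere (0 : Eu n) 1 := by
      rw [mem_sphere_zero_iff_norm, norm_smul, norm_inv, norm_norm, inv_mul_cancel₀ hn]
    refine le_trans ?_ (h.le_Ga x hv)
    rw [real_inner_smul_right, real_inner_self_eq_norm_sq]
    have : ‖x‖⁻¹ * ‖x‖ ^ 2 = ‖x‖ := by field_simp
    rw [this]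
    gcongr
    · exact h.pos hv
    · exact h.ub _ hv

lemma Good.Ga_nonneg (h : Good f c C) (x : Eu n) : 0 ≤ Ga f x :=
  (div_nonneg (norm_nonneg _) h.Cpos.le).trans (h.Ga_lower x)

lemma Good.Ga_pos (h : Good f c C) {x : Eu n} (hx : x ≠ 0) : 0 < Ga f x :=
  (div_pos (norm_pos_iff.2 hx) h.Cpos).trans_le (h.Ga_lower x)

lemma Good.Ga_add (h : Good f c C) (x y : Eu n) : Ga f (x + y) ≤ Ga f x + Ga f y := by
  apply h.Ga_le
  intro v hv
  rw [inner_add_left, add_div]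
  exact add_le_add (h.le_Ga x hv) (h.le_Ga y hv)

lemma Good.Ga_lip (h : Good f c C) : LipschitzWith (Real.toNNReal c⁻¹) (Ga f) := by
  apply LipschitzWith.of_le_add_mul
  intro x y
  rw [Real.coe_toNNReal _ (inv_nonneg.2 h.cpos.le)]
  have h1 := h.Ga_add y (x - y)
  have h2 := h.Ga_upper (x - y)
  rw [dist_eq_norm, inv_mul_eq_div]
  have : y + (x - y) = x := by abel
  rw [this] at h1
  linarith

lemma Good.Ga_cont (h : Good f c C) : Continuous (Ga f) := h.Ga_lip.continuous

lemma Good.ae_diff (h : Good f c C) : ∀ᵐ x : Eu n, x ≠ 0 ∧ DifferentiableAt ℝ (Ga f) x := by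
  have : Nonempty (Fin n) := ⟨⟨0, h.npos⟩⟩
  have h1 : ∀ᵐ x : Eu n, x ≠ 0 := by
    rw [ae_iff]; simp
  filter_upwards [h1, h.Ga_lip.ae_differentiableAt] with x hx hd using ⟨hx, hd⟩

lemma Good.nu_eq (h : Good f c C) {x u : Eu n} (hd : DifferentiableAt ℝ (Ga f) x)
    (hu : u ∈ Metric.sphere (0 : Eu n) 1) (hm : Ga f x = ⟪x, u⟫ / f u) : nu f x = u := by
  have hg : gradient (Ga f) x = (f u)⁻¹ • u := by
    have h1 : HasFDerivAt (fun y => Ga f y - innerSL ℝ ((f u)⁻¹ • u) y)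
        (fderiv ℝ (Ga f) x - innerSL ℝ ((f u)⁻¹ • u)) x :=
      hd.hasFDerivAt.sub (innerSL ℝ ((f u)⁻¹ • u)).hasFDerivAt
    have key : ∀ y : Eu n, innerSL ℝ ((f u)⁻¹ • u) y = ⟪y, u⟫ / f u := by
      intro y
      rw [innerSL_apply_apply, real_inner_smul_left, real_inner_comm, inv_mul_eq_div]
    have h2 : IsLocalMin (fun y => Ga f y - innerSL ℝ ((f u)⁻¹ • u) y) x := by
      apply Filter.Eventually.of_forall
      intro y
      simp only [key]
      rw [hm, sub_self]
      exact sub_nonneg.2 (h.le_Ga y hu)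
    have h3 := h2.hasFDerivAt_eq_zero h1
    rw [sub_eq_zero] at h3
    have h4 := hd.hasGradientAt.hasFDerivAt.fderiv
    apply (InnerProductSpace.toDual ℝ (Eu n)).injective
    rw [← h4, h3]
    ext y
    simp
  have hp := h.pos hu
  rw [nu, hg, norm_smul, mem_sphere_zero_iff_norm.1 hu, smul_smul, mul_one, norm_inv,
    Real.norm_of_nonneg hp.le, inv_inv, mul_inv_cancel₀ hp.ne', one_smul]

lemma Good.nu_spec (h : Good f c C) {x : Eu n} (hd : DifferentiableAt ℝ (Ga f) x) :
    nu f x ∈ Metric.sphere (0 : Eu n) 1 ∧ Ga f x = ⟪x, nu f x⟫ / f (nu f x) := by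
  obtain ⟨u, hu, h1, h2⟩ := h.exists_max x
  rw [h.nu_eq hd hu h1]
  exact ⟨hu, h1⟩

lemma nu_meas : Measurable (nu f) := by
  have : Measurable (gradient (Ga f)) := by
    unfold gradient
    exact (InnerProductSpace.toDual ℝ (Eu n)).symm.continuous.measurable.comp
      (measurable_fderiv ℝ (Ga f))
  exact this.norm.inv.smul this

lemma Good.Wu_closed_bdd (h : Good f c C) : Wu f ⊆ Metric.closedBall 0 C := by
  intro x hx
  have := (h.Ga_lower x).trans ((h.mem_Wu x).1 hx)
  rw [div_le_one h.Cpos] at this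
  simpa using this

lemma Good.ball_sub (h : Good f c C) : Metric.closedBall 0 c ⊆ Wu f := by
  intro x hx
  rw [h.mem_Wu]
  refine (h.Ga_upper x).trans ((div_le_one h.cpos).2 (by simpa using hx))

lemma Good.Wu_eq (h : Good f c C) : Wu f = {x | Ga f x ≤ 1} := by
  ext x; exact h.mem_Wu x

lemma Good.vol_Wu (h : Good f c C) :
    (volume (Wu f)).toReal = ((n.factorial : ℝ))⁻¹ * ∫ x, Real.exp (-Ga f x) := by
  have hm : Measurable (Ga f) := h.Ga_cont.measurable
  have key : ∫⁻ x, ENNReal.ofReal (Real.exp (-Ga f x))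
      = ENNReal.ofReal (n.factorial : ℝ) * volume (Wu f) := by
    have e1 : ∀ x : Eu n, ENNReal.ofReal (Real.exp (-Ga f x)) =
        ∫⁻ s in Ioi (0 : ℝ), (Ici (Ga f x)).indicator (fun s => ENNReal.ofReal (Real.exp (-s))) s := by
      intro x
      rw [lintegral_indicator measurableSet_Ici, Measure.restrict_restrict measurableSet_Ici,
        Measure.restrict_congr_set (t := Ioi (Ga f x)), ← ofReal_integral_eq_lintegral_ofReal,
        integral_exp_neg_Ioi]
      · exact integrableOn_exp_neg_Ioi _
      · exact Filter.Eventually.of_forall fun s => (Real.exp_pos _).le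
      · have h0 : Ioi (Ga f x) =ᵐ[volume] Ici (Ga f x) := Ioi_ae_eq_Ici
        have h1 : Ioi (Ga f x) ∩ Ioi 0 = Ioi (Ga f x) := by
          rw [inter_eq_left]; exact Ioi_subset_Ioi (h.Ga_nonneg x)
        have := (Filter.EventuallyEq.refl _ (Ioi (0 : ℝ))).inter h0.symm
        rw [inter_comm _ (Ioi (Ga f x)), h1, inter_comm] at this
        exact this
    simp_rw [e1]
    rw [lintegral_lintegral_swap]
    · have e2 : ∀ s ∈ Ioi (0 : ℝ), ∫⁻ x : Eu n, (Ici (Ga f x)).indicator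
          (fun s => ENNReal.ofReal (Real.exp (-s))) s
          = ENNReal.ofReal (Real.exp (-s) * s ^ n) * volume (Wu f) := by
        intro s hs
        have hs : 0 < s := hs
        have : ∀ x : Eu n, (Ici (Ga f x)).indicator (fun s => ENNReal.ofReal (Real.exp (-s))) s
            = {x | Ga f x ≤ s}.indicator (fun _ => ENNReal.ofReal (Real.exp (-s))) x := by
          intro x; simp [indicator]
        simp_rw [this]
        rw [lintegral_indicator_const (measurableSet_le hm measurable_const)]
        have hset : {x | Ga f x ≤ s} = s • Wu f := by
          ext x
          rw [mem_smul_set_iff_inv_smul_mem₀ hs.ne', h.mem_Wu, h.Ga_smul _ (inv_nonneg.2 hs.le),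
            inv_mul_le_iff₀ hs, mul_one]; rfl
        rw [hset, Measure.addHaar_smul, finrank_euclideanSpace_fin, abs_of_pos (by positivity),
          ← mul_assoc, ← ENNReal.ofReal_mul (Real.exp_pos _).le]
      rw [setLIntegral_congr_fun measurableSet_Ioi e2, lintegral_mul_const _ (by fun_prop)]
      congr 1
      have hG : (n.factorial : ℝ) = ∫ s in Ioi (0 : ℝ), Real.exp (-s) * s ^ n := by
        rw [← Real.Gamma_nat_eq_factorial, Real.Gamma_eq_integral (by positivity)]
        apply setIntegral_congr_fun measurableSet_Ioi
        intro s hs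
        simp
      rw [hG, ofReal_integral_eq_lintegral_ofReal]
      · have := Real.GammaIntegral_convergent (s := n + 1) (by positivity)
        refine this.congr_fun ?_ measurableSet_Ioi
        intro s hs
        simp
      · filter_upwards [ae_restrict_mem measurableSet_Ioi] with s hs
        have hs : 0 < s := hs
        show 0 ≤ _
        positivity
    · apply Measurable.aemeasurable
      have : (Function.uncurry fun (x : Eu n) (s : ℝ) => (Ici (Ga f x)).indicator
          (fun s => ENNReal.ofReal (Real.exp (-s))) s)
          = {z : Eu n × ℝ | Ga f z.1 ≤ z.2}.indicator
            (fun z => ENNReal.ofReal (Real.exp (-z.2))) := by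
        ext z; simp [indicator, Function.uncurry]
      rw [this]
      apply Measurable.indicator (by fun_prop)
      exact measurableSet_le (hm.comp measurable_fst) measurable_snd
  rw [integral_eq_lintegral_of_nonneg_ae, key, ENNReal.toReal_mul, ENNReal.toReal_ofReal]
  · field_simp
  · positivity
  · exact Filter.Eventually.of_forall fun s => (Real.exp_pos _).le
  · exact (hm.neg.exp).aestronglyMeasurable

end basic

/-- good differentiable family -/
structure Fam {n : ℕ} (f f' : ℝ → Eu n → ℝ) (c C D : ℝ) : Prop where
  good : ∀ l ∈ Icc (0 : ℝ) 1, Good (f l) c C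
  cont : ContinuousOn (fun z : ℝ × Eu n => f z.1 z.2) (Icc (0 : ℝ) 1 ×ˢ {0}ᶜ)
  cont' : ContinuousOn (fun z : ℝ × Eu n => f' z.1 z.2) (Icc (0 : ℝ) 1 ×ˢ {0}ᶜ)
  der : ∀ l ∈ Icc (0 : ℝ) 1, ∀ u ∈ Metric.sphere (0 : Eu n) 1,
    HasDerivWithinAt (fun l => f l u) (f' l u) (Icc 0 1) l
  bd : ∀ l ∈ Icc (0 : ℝ) 1, ∀ u ∈ Metric.sphere (0 : Eu n) 1, |f' l u| ≤ D

/-- the variation functional -/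
noncomputable def Jf {n : ℕ} (f φ : Eu n → ℝ) : ℝ :=
  ((n.factorial : ℝ))⁻¹ * ∫ x, Real.exp (-Ga f x) * Ga f x * (φ (nu f x) / f (nu f x))

lemma exists_fam {n : ℕ} (hn : 0 < n) (f f' : ℝ → Eu n → ℝ)
    (cont : ContinuousOn (fun z : ℝ × Eu n => f z.1 z.2) (Icc (0 : ℝ) 1 ×ˢ {0}ᶜ))
    (cont' : ContinuousOn (fun z : ℝ × Eu n => f' z.1 z.2) (Icc (0 : ℝ) 1 ×ˢ {0}ᶜ))
    (der : ∀ l ∈ Icc (0 : ℝ) 1, ∀ u ∈ Metric.sphere (0 : Eu n) 1,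
      HasDerivWithinAt (fun l => f l u) (f' l u) (Icc 0 1) l)
    (pos : ∀ l ∈ Icc (0 : ℝ) 1, ∀ u ∈ Metric.sphere (0 : Eu n) 1, 0 < f l u) :
    ∃ c C D, Fam f f' c C D := by
  have hcomp : IsCompact (Icc (0 : ℝ) 1 ×ˢ Metric.sphere (0 : Eu n) 1) :=
    isCompact_Icc.prod (isCompact_sphere _ _)
  have hne : (Icc (0 : ℝ) 1 ×ˢ Metric.sphere (0 : Eu n) 1).Nonempty :=
    (nonempty_Icc.2 zero_le_one).prod (sphere_ne hn)
  have hsub : Icc (0 : ℝ) 1 ×ˢ Metric.sphere (0 : Eu n) 1 ⊆ Icc (0 : ℝ) 1 ×ˢ {0}ᶜ :=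
    prod_mono le_rfl sphere_sub
  obtain ⟨z, hz, hzm⟩ := hcomp.exists_isMinOn hne (cont.mono hsub)
  obtain ⟨w, hw, hwm⟩ := hcomp.exists_isMaxOn hne (cont.mono hsub)
  obtain ⟨D, hD⟩ := hcomp.exists_bound_of_continuousOn (cont'.mono hsub)
  refine ⟨f z.1 z.2, f w.1 w.2, D, ?_, cont, cont', der, ?_⟩
  · intro l hl
    refine ⟨hn, pos _ hz.1 _ hz.2, ?_, ?_, ?_⟩
    · exact cont.comp (f := fun u : Eu n => (l, u)) (by fun_prop) (fun u hu => ⟨hl, hu⟩)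
    · intro u hu
      exact hzm (show (l, u) ∈ _ from ⟨hl, hu⟩)
    · intro u hu
      exact hwm (show (l, u) ∈ _ from ⟨hl, hu⟩)
  · intro l hl u hu
    exact hD (l, u) ⟨hl, hu⟩

section fam
open Filter Topology
variable {n : ℕ} {f f' : ℝ → Eu n → ℝ} {c C D : ℝ}

lemma Fam.tendsto_max (h : Fam f f' c C D) {l0 : ℝ} (hl0 : l0 ∈ Icc (0 : ℝ) 1) {x : Eu n}
    (hd : DifferentiableAt ℝ (Ga (f l0)) x) {u : ℝ → Eu n}
    (hu : ∀ l ∈ Icc (0 : ℝ) 1, u l ∈ Metric.sphere (0 : Eu n) 1 ∧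
      Ga (f l) x = ⟪x, u l⟫ / f l (u l)) :
    Tendsto u (𝓝[Icc 0 1] l0) (𝓝 (nu (f l0) x)) := by
  rw [tendsto_iff_ultrafilter]
  intro U hU
  have hUI : ∀ᶠ l in (U : Filter ℝ), l ∈ Icc (0 : ℝ) 1 := hU self_mem_nhdsWithin
  have hUl : Tendsto (fun l => l) (U : Filter ℝ) (𝓝 l0) := hU.trans nhdsWithin_le_nhds
  obtain ⟨y, hy, hUy⟩ := (isCompact_sphere (0 : Eu n) 1).ultrafilter_le_nhds (U.map u) (by
    rw [le_principal_iff]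
    exact hUI.mono fun l hl => (hu l hl).1)
  have hUy : Tendsto u U (𝓝 y) := hUy
  have hlim : ∀ (w : ℝ → Eu n) (z : Eu n), z ∈ Metric.sphere (0 : Eu n) 1 →
      (∀ᶠ l in (U : Filter ℝ), w l ∈ Metric.sphere (0 : Eu n) 1) → Tendsto w U (𝓝 z) →
      Tendsto (fun l => ⟪x, w l⟫ / f l (w l)) U (𝓝 (⟪x, z⟫ / f l0 z)) := by
    intro w z hz hw hwz
    have h1 : Tendsto (fun l => f l (w l)) U (𝓝 (f l0 z)) := by
      have := h.cont (l0, z) ⟨hl0, sphere_sub hz⟩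
      refine Tendsto.comp (f := fun l => (l, w l)) this ?_
      rw [tendsto_nhdsWithin_iff]
      refine ⟨hUl.prodMk_nhds hwz, ?_⟩
      filter_upwards [hUI, hw] with l h1 h2 using ⟨h1, sphere_sub h2⟩
    exact Tendsto.div (tendsto_const_nhds.inner hwz) h1 ((h.good l0 hl0).pos hz).ne'
  have hmax : Ga (f l0) x = ⟪x, y⟫ / f l0 y := by
    apply le_antisymm
    · apply (h.good l0 hl0).Ga_le
      intro v hv
      refine le_of_tendsto_of_tendsto (hlim (fun _ => v) v hv (Eventually.of_forall fun _ => hv)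
        tendsto_const_nhds) (hlim u y hy (hUI.mono fun l hl => (hu l hl).1) hUy) ?_
      filter_upwards [hUI] with l hl
      rw [← (hu l hl).2]
      exact (h.good l hl).le_Ga x hv
    · exact (h.good l0 hl0).le_Ga x hy
  rw [(h.good l0 hl0).nu_eq hd hy hmax]
  exact hUy

lemma Fam.der_phi (h : Fam f f' c C D) (x : Eu n) {l : ℝ} (hl : l ∈ Icc (0 : ℝ) 1) {u : Eu n}
    (hu : u ∈ Metric.sphere (0 : Eu n) 1) :
    HasDerivWithinAt (fun l => ⟪x, u⟫ / f l u) (-(⟪x, u⟫ * f' l u / f l u ^ 2)) (Icc 0 1) l := by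
  have := (hasDerivWithinAt_const l (Icc (0 : ℝ) 1) ⟪x, u⟫).div (h.der l hl u hu)
    ((h.good l hl).pos hu).ne'
  simp only [zero_mul, zero_sub, neg_div] at this
  exact this

lemma Fam.Dnn (h : Fam f f' c C D) : 0 ≤ D := by
  have h0 : (0 : ℝ) ∈ Icc (0 : ℝ) 1 := by simp
  obtain ⟨u, hu⟩ := sphere_ne (h.good 0 h0).npos
  exact (abs_nonneg _).trans (h.bd 0 h0 u hu)

lemma Fam.cpos (h : Fam f f' c C D) : 0 < c := (h.good 0 (by simp)).cpos
lemma Fam.Cpos (h : Fam f f' c C D) : 0 < C := (h.good 0 (by simp)).Cpos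

lemma Fam.phi_lip (h : Fam f f' c C D) (x : Eu n) {l m : ℝ} (hl : l ∈ Icc (0 : ℝ) 1)
    (hm : m ∈ Icc (0 : ℝ) 1) {u : Eu n} (hu : u ∈ Metric.sphere (0 : Eu n) 1) :
    |⟪x, u⟫ / f l u - ⟪x, u⟫ / f m u| ≤ ‖x‖ * D / c ^ 2 * |l - m| := by
  have := Convex.norm_image_sub_le_of_norm_hasDerivWithin_le (s := Icc (0 : ℝ) 1)
    (f := fun l => ⟪x, u⟫ / f l u) (C := ‖x‖ * D / c ^ 2)
    (fun l hl => h.der_phi x hl hu) ?_ (convex_Icc 0 1) hm hl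
  · exact this
  · intro l hl
    have hc := h.cpos
    have hD := h.Dnn
    have hf := (h.good l hl).lb u hu
    rw [norm_neg, Real.norm_eq_abs, abs_div, abs_mul, abs_of_nonneg (sq_nonneg (f l u))]
    have h1 : |⟪x, u⟫| ≤ ‖x‖ := by
      have := abs_real_inner_le_norm x u
      rwa [mem_sphere_zero_iff_norm.1 hu, mul_one] at this
    have h2 := h.bd l hl u hu
    gcongr

lemma Fam.Ga_lip_l (h : Fam f f' c C D) (x : Eu n) {l m : ℝ} (hl : l ∈ Icc (0 : ℝ) 1)
    (hm : m ∈ Icc (0 : ℝ) 1) :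
    |Ga (f l) x - Ga (f m) x| ≤ ‖x‖ * D / c ^ 2 * |l - m| := by
  obtain ⟨u, hu, h1, h2⟩ := (h.good l hl).exists_max x
  obtain ⟨v, hv, h3, h4⟩ := (h.good m hm).exists_max x
  have a1 := h4 u hu
  have a2 := h2 v hv
  have b1 := abs_le.1 (h.phi_lip x hl hm hu)
  have b2 := abs_le.1 (h.phi_lip x hl hm hv)
  rw [abs_le]
  constructor
  · linarith [b2.1]
  · linarith [b1.2]

lemma Fam.Ga_der (h : Fam f f' c C D) {l0 : ℝ} (hl0 : l0 ∈ Icc (0 : ℝ) 1) {x : Eu n}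
    (hd : DifferentiableAt ℝ (Ga (f l0)) x) :
    HasDerivWithinAt (fun l => Ga (f l) x)
      (-(Ga (f l0) x * (f' l0 (nu (f l0) x) / f l0 (nu (f l0) x)))) (Icc 0 1) l0 := by
  have hex : ∀ l, ∃ u, l ∈ Icc (0 : ℝ) 1 → (u ∈ Metric.sphere (0 : Eu n) 1 ∧
      Ga (f l) x = ⟪x, u⟫ / f l u) := by
    intro l
    by_cases hl : l ∈ Icc (0 : ℝ) 1
    · obtain ⟨u, hu, h1, h2⟩ := (h.good l hl).exists_max x
      exact ⟨u, fun _ => ⟨hu, h1⟩⟩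
    · exact ⟨0, fun h => absurd h hl⟩
  choose u hu using hex
  have hlim := h.tendsto_max hl0 hd hu
  obtain ⟨hu0, hG0⟩ := (h.good l0 hl0).nu_spec hd
  set u0 := nu (f l0) x with hu0def
  set d := -(⟪x, u0⟫ * f' l0 u0 / f l0 u0 ^ 2) with hddef
  have hd' : -(Ga (f l0) x * (f' l0 u0 / f l0 u0)) = d := by
    have := ((h.good l0 hl0).pos hu0).ne'
    rw [hG0, hddef]; field_simp
  rw [hd']
  rw [hasDerivWithinAt_iff_isLittleO, Asymptotics.isLittleO_iff]
  intro ε hε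
  have hψ : ContinuousWithinAt (fun z : ℝ × Eu n => -(⟪x, z.2⟫ * f' z.1 z.2 / f z.1 z.2 ^ 2))
      (Icc (0 : ℝ) 1 ×ˢ {0}ᶜ) (l0, u0) := by
    have hz : (l0, u0) ∈ Icc (0 : ℝ) 1 ×ˢ ({0}ᶜ : Set (Eu n)) := ⟨hl0, sphere_sub hu0⟩
    have c1 := h.cont _ hz
    have c2 := h.cont' _ hz
    refine ContinuousWithinAt.neg (ContinuousWithinAt.div (ContinuousWithinAt.mul ?_ c2)
      (c1.pow 2) (pow_ne_zero 2 ((h.good l0 hl0).pos hu0).ne'))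
    fun_prop
  obtain ⟨δ, hδ, hδε⟩ := Metric.continuousWithinAt_iff.1 hψ ε hε
  have key : ∀ l ∈ Icc (0 : ℝ) 1, |l - l0| < δ → ∀ v ∈ Metric.sphere (0 : Eu n) 1, dist v u0 < δ →
      |⟪x, v⟫ / f l v - ⟪x, v⟫ / f l0 v - (l - l0) * d| ≤ ε * |l - l0| := by
    intro l hl hll v hv hvv
    have := Convex.norm_image_sub_le_of_norm_hasDerivWithin_le
      (s := Icc (0 : ℝ) 1 ∩ Metric.ball l0 δ)
      (f := fun l => ⟪x, v⟫ / f l v - l * d) (C := ε)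
      (f' := fun l => -(⟪x, v⟫ * f' l v / f l v ^ 2) - 1 * d) (x := l0) (y := l)
      (fun m hm => (((h.der_phi x hm.1 hv).mono inter_subset_left).sub
        ((hasDerivWithinAt_id m _).mul_const d))) ?_
      ((convex_Icc 0 1).inter (convex_ball l0 δ)) ⟨hl0, Metric.mem_ball_self hδ⟩
      ⟨hl, by simpa [Real.dist_eq] using hll⟩
    · rw [Real.norm_eq_abs, Real.norm_eq_abs] at this
      convert this using 2
      ring
    · intro m hm
      have := hδε (x := (m, v)) ⟨hm.1, sphere_sub hv⟩ (by
        rw [Prod.dist_eq]; exact max_lt hm.2 hvv)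
      rw [Real.dist_eq] at this
      rw [Real.norm_eq_abs, one_mul]
      exact this.le
  have hev : ∀ᶠ l in 𝓝[Icc (0 : ℝ) 1] l0, dist (u l) u0 < δ :=
    hlim (Metric.ball_mem_nhds u0 hδ)
  have hev2 : ∀ᶠ l in 𝓝[Icc (0 : ℝ) 1] l0, |l - l0| < δ := by
    have : ∀ᶠ l in 𝓝 l0, |l - l0| < δ := Metric.ball_mem_nhds l0 hδ
    exact this.filter_mono nhdsWithin_le_nhds
  filter_upwards [hev, hev2, self_mem_nhdsWithin] with l h1 h2 hl
  have k1 := abs_le.1 (key l hl h2 (u l) (hu l hl).1 h1)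
  have k2 := abs_le.1 (key l hl h2 u0 hu0 (by simpa using hδ))
  have m1 := (h.good l hl).le_Ga x hu0
  have m2 := (h.good l0 hl0).le_Ga x (hu l hl).1
  have m3 := (hu l hl).2
  rw [Real.norm_eq_abs, Real.norm_eq_abs, smul_eq_mul, abs_le]
  constructor
  · linarith [k2.1]
  · linarith [k1.2]

lemma integrable_bound (hn : 0 < n) {b : ℝ} (hb : 0 < b) :
    Integrable (fun x : Eu n => ‖x‖ * Real.exp (-(b * ‖x‖))) := by
  have : Nonempty (Fin n) := ⟨⟨0, hn⟩⟩
  rw [integrable_fun_norm_addHaar (volume : Measure (Eu n)) (f := fun t => t * Real.exp (-(b * t)))]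
  have := integrableOn_rpow_mul_exp_neg_mul_rpow (p := 1) (s := n) (b := b) (by
    have : (0 : ℝ) < n := by exact_mod_cast hn
    linarith) one_pos hb
  refine this.congr_fun ?_ measurableSet_Ioi
  intro t ht
  simp only [finrank_euclideanSpace_fin, smul_eq_mul, Real.rpow_natCast, Real.rpow_one]
  rw [← mul_assoc, ← pow_succ, Nat.sub_add_cancel hn, neg_mul]

lemma Good.integrable_exp {f : Eu n → ℝ} (h : Good f c C) :
    Integrable (fun x : Eu n => Real.exp (-Ga f x)) := by
  have : Nonempty (Fin n) := ⟨⟨0, h.npos⟩⟩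
  have hb : Integrable (fun x : Eu n => Real.exp (-(C⁻¹ * ‖x‖))) := by
    rw [integrable_fun_norm_addHaar (volume : Measure (Eu n))
      (f := fun t => Real.exp (-(C⁻¹ * t)))]
    have := integrableOn_rpow_mul_exp_neg_mul_rpow (p := 1) (s := (n - 1 : ℕ)) (b := C⁻¹) (by
      have : (0 : ℝ) ≤ (n - 1 : ℕ) := by positivity
      linarith) one_pos (inv_pos.2 h.Cpos)
    refine this.congr_fun ?_ measurableSet_Ioi
    intro t ht
    simp only [finrank_euclideanSpace_fin, smul_eq_mul, Real.rpow_natCast, Real.rpow_one]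
    rw [neg_mul]
  refine hb.mono' (h.Ga_cont.neg.rexp).aestronglyMeasurable ?_
  refine Eventually.of_forall fun x => ?_
  rw [Real.norm_of_nonneg (Real.exp_pos _).le]
  apply Real.exp_le_exp.2
  have := h.Ga_lower x
  rw [div_eq_inv_mul] at this
  linarith

lemma exp_diff {a b m : ℝ} (ha : m ≤ a) (hb : m ≤ b) :
    |Real.exp (-a) - Real.exp (-b)| ≤ Real.exp (-m) * |a - b| := by
  have := Convex.norm_image_sub_le_of_norm_hasDerivWithin_le (s := Ici m)
    (f := fun t => Real.exp (-t)) (f' := fun t => Real.exp (-t) * (-1)) (C := Real.exp (-m))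
    (fun t _ => ((hasDerivAt_id t).neg.exp).hasDerivWithinAt) ?_ (convex_Ici m) hb ha
  · exact this
  · intro t ht
    rw [mul_neg_one, norm_neg, Real.norm_of_nonneg (Real.exp_pos _).le]
    exact Real.exp_le_exp.2 (neg_le_neg ht)

lemma Fam.vol_der (h : Fam f f' c C D) {l0 : ℝ} (hl0 : l0 ∈ Icc (0 : ℝ) 1) :
    HasDerivWithinAt (fun l => (volume (Wu (f l))).toReal) (Jf (f l0) (f' l0)) (Icc 0 1) l0 := by
  have hV : HasDerivWithinAt (fun l => ((n.factorial : ℝ))⁻¹ * ∫ x, Real.exp (-Ga (f l) x))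
      (Jf (f l0) (f' l0)) (Icc 0 1) l0 := by
    unfold Jf
    apply HasDerivWithinAt.const_mul
    rw [hasDerivWithinAt_iff_tendsto_slope]
    have hmem : ∀ᶠ l in 𝓝[Icc (0 : ℝ) 1 \ {l0}] l0, l ∈ Icc (0 : ℝ) 1 \ {l0} :=
      self_mem_nhdsWithin
    have hT := tendsto_integral_filter_of_dominated_convergence (μ := (volume : Measure (Eu n)))
      (l := 𝓝[Icc (0 : ℝ) 1 \ {l0}] l0)
      (F := fun l x => slope (fun l => Real.exp (-Ga (f l) x)) l0 l)
      (f := fun x => Real.exp (-Ga (f l0) x) * Ga (f l0) x *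
        (f' l0 (nu (f l0) x) / f l0 (nu (f l0) x)))
      (fun x => D / c ^ 2 * (‖x‖ * Real.exp (-(C⁻¹ * ‖x‖)))) ?_ ?_ ?_ ?_
    · refine hT.congr' ?_
      filter_upwards [hmem] with l hl
      simp only [slope, vsub_eq_sub, smul_eq_mul]
      rw [integral_const_mul, integral_sub (h.good l hl.1).integrable_exp
        (h.good l0 hl0).integrable_exp]
    · filter_upwards [hmem] with l hl
      apply Continuous.aestronglyMeasurable
      simp only [slope, vsub_eq_sub, smul_eq_mul]
      have := (h.good l hl.1).Ga_cont
      have := (h.good l0 hl0).Ga_cont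
      fun_prop
    · filter_upwards [hmem] with l hl
      refine Eventually.of_forall fun x => ?_
      simp only [slope, vsub_eq_sub, smul_eq_mul]
      have e1 := (h.good l hl.1).Ga_lower x
      have e2 := (h.good l0 hl0).Ga_lower x
      have e3 := exp_diff e1 e2
      have e4 := h.Ga_lip_l x hl.1 hl0
      have hne : 0 < |l - l0| := abs_pos.2 (sub_ne_zero.2 hl.2)
      rw [norm_mul, norm_inv, Real.norm_eq_abs, Real.norm_eq_abs, inv_mul_le_iff₀ hne]
      refine e3.trans ?_
      rw [← div_eq_inv_mul]
      calc _ ≤ Real.exp (-(‖x‖ / C)) * (‖x‖ * D / c ^ 2 * |l - l0|) := by gcongr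
        _ = _ := by ring
    · exact (integrable_bound (h.good l0 hl0).npos (inv_pos.2 h.Cpos)).const_mul _
    · filter_upwards [(h.good l0 hl0).ae_diff] with x hx
      have := (h.Ga_der hl0 hx.2).neg.exp
      rw [hasDerivWithinAt_iff_tendsto_slope] at this
      have e : ∀ a b : ℝ, a * - -b = a * b := by intro a b; ring
      rw [e, ← mul_assoc] at this
      exact this
  refine hV.congr (fun l hl => (h.good l hl).vol_Wu) (h.good l0 hl0).vol_Wu

lemma Fam.meas (h : Fam f f' c C D) {l : ℝ} (hl : l ∈ Icc (0 : ℝ) 1) :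
    Measurable (f l) ∧ Measurable (f' l) := by
  constructor
  · exact measurable_of_continuousOn_compl_singleton 0 (h.good l hl).cont
  · exact measurable_of_continuousOn_compl_singleton 0
      (h.cont'.comp (f := fun u : Eu n => (l, u)) (by fun_prop) (fun u hu => ⟨hl, hu⟩))

lemma Fam.J_cont (h : Fam f f' c C D) :
    ContinuousOn (fun l => Jf (f l) (f' l)) (Icc (0 : ℝ) 1) := by
  intro l0 hl0
  unfold Jf
  apply ContinuousWithinAt.mul continuousWithinAt_const
  unfold ContinuousWithinAt
  apply tendsto_of_seq_tendsto
  intro s hs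
  -- replace the sequence by one staying in `Icc 0 1` eventually
  have hsI : ∀ᶠ k in atTop, s k ∈ Icc (0 : ℝ) 1 := hs.eventually self_mem_nhdsWithin
  have hcC := h.Cpos
  have hc := h.cpos
  have hD := h.Dnn
  refine tendsto_integral_filter_of_dominated_convergence
    (fun x => D / c ^ 2 * (‖x‖ * Real.exp (-(C⁻¹ * ‖x‖)))) ?_ ?_ ?_ ?_
  · filter_upwards [hsI] with k hk
    have m1 := (h.meas hk).1.comp (nu_meas (f := f (s k)))
    have m2 := (h.meas hk).2.comp (nu_meas (f := f (s k)))
    have m3 := (h.good _ hk).Ga_cont.measurable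
    exact ((m3.neg.exp.mul m3).mul (m2.div m1)).aestronglyMeasurable
  · filter_upwards [hsI] with k hk
    filter_upwards [(h.good _ hk).ae_diff] with x hx
    have hg := h.good _ hk
    obtain ⟨hν, -⟩ := hg.nu_spec hx.2
    have b1 := hg.Ga_upper x
    have b2 := hg.Ga_lower x
    have b3 := h.bd _ hk _ hν
    have b4 := hg.lb _ hν
    have b5 := hg.Ga_nonneg x
    rw [norm_mul, norm_mul, Real.norm_of_nonneg (Real.exp_pos _).le, Real.norm_of_nonneg b5,
      norm_div, Real.norm_eq_abs, Real.norm_of_nonneg (hg.pos hν).le]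
    calc _ ≤ Real.exp (-(‖x‖ / C)) * (‖x‖ / c) * (D / c) := by
          have b6 := (hg.pos hν).le
          gcongr
      _ = _ := by rw [← div_eq_inv_mul]; field_simp
  · exact (integrable_bound (h.good l0 hl0).npos (inv_pos.2 h.Cpos)).const_mul _
  · have hall : ∀ᵐ x : Eu n, ∀ k, s k ∈ Icc (0 : ℝ) 1 → DifferentiableAt ℝ (Ga (f (s k))) x := by
      rw [ae_all_iff]
      intro k
      by_cases hk : s k ∈ Icc (0 : ℝ) 1
      · filter_upwards [(h.good _ hk).ae_diff] with x hx _ using hx.2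
      · exact Eventually.of_forall fun x hh => absurd hh hk
    filter_upwards [hall, (h.good l0 hl0).ae_diff] with x hx hx0
    have hex : ∀ l, ∃ u, l ∈ Icc (0 : ℝ) 1 → (u ∈ Metric.sphere (0 : Eu n) 1 ∧
        Ga (f l) x = ⟪x, u⟫ / f l u) := by
      intro l
      by_cases hl : l ∈ Icc (0 : ℝ) 1
      · obtain ⟨u, hu, h1, h2⟩ := (h.good l hl).exists_max x
        exact ⟨u, fun _ => ⟨hu, h1⟩⟩
      · exact ⟨0, fun h => absurd h hl⟩
    choose u hu using hex
    have hlim := (h.tendsto_max hl0 hx0.2 hu).comp hs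
    have hlim : Tendsto (fun k => nu (f (s k)) x) atTop (𝓝 (nu (f l0) x)) := by
      refine hlim.congr' ?_
      filter_upwards [hsI] with k hk
      exact ((h.good _ hk).nu_eq (hx k hk) (hu _ hk).1 (hu _ hk).2).symm
    obtain ⟨hν0, -⟩ := (h.good l0 hl0).nu_spec hx0.2
    have hpair : Tendsto (fun k => (s k, nu (f (s k)) x)) atTop
        (𝓝[Icc (0 : ℝ) 1 ×ˢ {0}ᶜ] (l0, nu (f l0) x)) := by
      rw [tendsto_nhdsWithin_iff]
      refine ⟨(hs.mono_right nhdsWithin_le_nhds).prodMk_nhds hlim, ?_⟩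
      filter_upwards [hsI] with k hk
      exact ⟨hk, sphere_sub ((h.good _ hk).nu_spec (hx k hk)).1⟩
    have hz : (l0, nu (f l0) x) ∈ Icc (0 : ℝ) 1 ×ˢ ({0}ᶜ : Set (Eu n)) := ⟨hl0, sphere_sub hν0⟩
    have t1 := (h.cont _ hz).tendsto.comp hpair
    have t2 := (h.cont' _ hz).tendsto.comp hpair
    have t3 : Tendsto (fun k => Ga (f (s k)) x) atTop (𝓝 (Ga (f l0) x)) :=
      (h.Ga_der hl0 hx0.2).continuousWithinAt.tendsto.comp hs
    exact ((t3.neg.rexp).mul t3).mul (t2.div t1 ((h.good l0 hl0).pos hν0).ne')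

end fam

/-- convex body with zero in the interior -/
structure Body {n : ℕ} (M : Set (Eu n)) : Prop where
  comp : IsCompact M
  conv : Convex ℝ M
  int : (0 : Eu n) ∈ interior M

section supp
variable {n : ℕ} {M N : Set (Eu n)}

lemma Body.zero (h : Body M) : (0 : Eu n) ∈ M := interior_subset h.int
lemma Body.ne (h : Body M) : M.Nonempty := ⟨0, h.zero⟩

lemma suppFn_isGreatest (hc : IsCompact M) (hne : M.Nonempty) (u : Eu n) :
    ∃ x ∈ M, suppFn M u = ⟪x, u⟫ ∧ ∀ y ∈ M, ⟪y, u⟫ ≤ suppFn M u := by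
  obtain ⟨x, hx, hm⟩ := hc.exists_isMaxOn hne (f := fun x => ⟪x, u⟫) (by fun_prop)
  have : suppFn M u = ⟪x, u⟫ := by
    apply IsGreatest.csSup_eq
    refine ⟨⟨x, hx, rfl⟩, ?_⟩
    rintro _ ⟨v, hv, rfl⟩
    exact hm hv
  refine ⟨x, hx, this, fun v hv => ?_⟩
  rw [this]; exact hm hv

lemma Body.le_supp (h : Body M) {x : Eu n} (hx : x ∈ M) (u : Eu n) : ⟪x, u⟫ ≤ suppFn M u := by
  obtain ⟨_, _, _, h2⟩ := suppFn_isGreatest h.comp h.ne u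
  exact h2 x hx

lemma Body.supp_le (h : Body M) {u : Eu n} {a : ℝ} (ha : ∀ x ∈ M, ⟪x, u⟫ ≤ a) :
    suppFn M u ≤ a := by
  obtain ⟨x, hx, h1, h2⟩ := suppFn_isGreatest h.comp h.ne u
  rw [h1]; exact ha x hx

lemma Body.supp_smul (h : Body M) (u : Eu n) {s : ℝ} (hs : 0 ≤ s) :
    suppFn M (s • u) = s * suppFn M u := by
  apply le_antisymm
  · apply h.supp_le
    intro x hx
    rw [real_inner_smul_right]
    exact mul_le_mul_of_nonneg_left (h.le_supp hx u) hs
  · obtain ⟨x, hx, h1, -⟩ := suppFn_isGreatest h.comp h.ne u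
    rw [h1, ← real_inner_smul_right]
    exact h.le_supp hx _

lemma Body.supp_zero (h : Body M) : suppFn M 0 = 0 := by
  have := h.supp_smul 0 (s := 0) le_rfl
  simpa using this

lemma Body.supp_add (h : Body M) (u v : Eu n) :
    suppFn M (u + v) ≤ suppFn M u + suppFn M v := by
  apply h.supp_le
  intro x hx
  rw [inner_add_right]
  exact add_le_add (h.le_supp hx u) (h.le_supp hx v)

lemma Body.supp_bound (h : Body M) : ∃ R : ℝ, 0 ≤ R ∧ ∀ u, suppFn M u ≤ R * ‖u‖ := by
  obtain ⟨R, hR⟩ := h.comp.isBounded.exists_norm_le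
  refine ⟨R, (norm_nonneg _).trans (hR 0 h.zero), fun u => ?_⟩
  apply h.supp_le
  intro x hx
  refine (real_inner_le_norm x u).trans ?_
  gcongr
  exact hR x hx

lemma Body.supp_cont (h : Body M) : Continuous (suppFn M) := by
  obtain ⟨R, hR0, hR⟩ := h.supp_bound
  have : LipschitzWith (Real.toNNReal R) (suppFn M) := by
    apply LipschitzWith.of_le_add_mul
    intro x y
    rw [Real.coe_toNNReal _ hR0]
    have h1 := h.supp_add y (x - y)
    have h2 := hR (x - y)
    rw [dist_eq_norm]
    have : y + (x - y) = x := by abel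
    rw [this] at h1
    linarith
  exact this.continuous

lemma Body.supp_pos (h : Body M) {u : Eu n} (hu : u ≠ 0) : 0 < suppFn M u := by
  obtain ⟨r, hr, hb⟩ := Metric.mem_nhds_iff.1 (mem_interior_iff_mem_nhds.1 h.int)
  have hn : 0 < ‖u‖ := norm_pos_iff.2 hu
  have hx : (r / 2 / ‖u‖) • u ∈ M := by
    apply hb
    rw [mem_ball_zero_iff, norm_smul, Real.norm_of_nonneg (by positivity)]
    field_simp
    linarith
  refine lt_of_lt_of_le ?_ (h.le_supp hx u)
  rw [real_inner_smul_left, real_inner_self_eq_norm_sq]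
  positivity

lemma Body.supp_nonneg (h : Body M) (u : Eu n) : 0 ≤ suppFn M u := by
  have := h.le_supp h.zero u
  simpa using this

lemma Body.add_smul (hM : Body M) (hN : Body N) {t : ℝ} (_ht : 0 ≤ t) : Body (M + t • N) := by
  refine ⟨hM.comp.add (hN.comp.smul t), hM.conv.add (hN.conv.smul t), ?_⟩
  have : M ⊆ M + t • N := by
    intro x hx
    exact ⟨x, hx, 0, ⟨0, hN.zero, by simp⟩, by simp⟩
  exact interior_mono this hM.int

lemma Body.supp_add_smul (hM : Body M) (hN : Body N) {t : ℝ} (ht : 0 ≤ t) (u : Eu n) :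
    suppFn (M + t • N) u = suppFn M u + t * suppFn N u := by
  have hb := hM.add_smul hN ht
  apply le_antisymm
  · apply hb.supp_le
    rintro _ ⟨x, hx, _, ⟨y, hy, rfl⟩, rfl⟩
    simp only [inner_add_left, real_inner_smul_left]
    exact add_le_add (hM.le_supp hx u) (mul_le_mul_of_nonneg_left (hN.le_supp hy u) ht)
  · obtain ⟨x, hx, h1, -⟩ := suppFn_isGreatest hM.comp hM.ne u
    obtain ⟨y, hy, h2, -⟩ := suppFn_isGreatest hN.comp hN.ne u
    rw [h1, h2, ← real_inner_smul_left, ← inner_add_left]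
    exact hb.le_supp ⟨x, hx, _, ⟨y, hy, rfl⟩, rfl⟩ u

lemma Body.add (hM : Body M) (hN : Body N) :
    ∃ P, Body P ∧ ∀ u, suppFn P u = suppFn M u + suppFn N u :=
  ⟨M + (1 : ℝ) • N, hM.add_smul hN zero_le_one, fun u => by
    rw [hM.supp_add_smul hN zero_le_one, one_mul]⟩

lemma Body.sup (hM : Body M) (hN : Body N) :
    ∃ P, Body P ∧ ∀ u, suppFn P u = max (suppFn M u) (suppFn N u) := by
  have hsub : M ∪ N ⊆ closure (convexHull ℝ (M ∪ N)) :=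
    (subset_convexHull ℝ _).trans subset_closure
  have hb : Body (closure (convexHull ℝ (M ∪ N))) := by
    refine ⟨?_, (convex_convexHull ℝ _).closure,
      interior_mono (subset_union_left.trans hsub) hM.int⟩
    apply Metric.isCompact_of_isClosed_isBounded isClosed_closure
    exact (isBounded_convexHull.2 (hM.comp.isBounded.union hN.comp.isBounded)).closure
  refine ⟨_, hb, fun u => le_antisymm ?_ ?_⟩
  · apply hb.supp_le
    have : closure (convexHull ℝ (M ∪ N)) ⊆ {x | ⟪x, u⟫ ≤ max (suppFn M u) (suppFn N u)} := by
      apply closure_minimal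
      · apply convexHull_min
        · rintro x (hx | hx)
          · exact (hM.le_supp hx u).trans (le_max_left _ _)
          · exact (hN.le_supp hx u).trans (le_max_right _ _)
        · intro x hx y hy a b ha hb hab
          simp only [mem_ofPred_eq, inner_add_left, real_inner_smul_left] at hx hy ⊢
          have h1 := mul_le_mul_of_nonneg_left hx ha
          have h2 := mul_le_mul_of_nonneg_left hy hb
          have h3 : a * max (suppFn M u) (suppFn N u) + b * max (suppFn M u) (suppFn N u)
            = max (suppFn M u) (suppFn N u) := by rw [← add_mul, hab, one_mul]
          linarith
      · exact isClosed_le (by fun_prop) continuous_const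
    exact fun x hx => this hx
  · apply max_le
    · exact hM.supp_le fun x hx => hb.le_supp (hsub (Or.inl hx)) u
    · exact hN.supp_le fun x hx => hb.le_supp (hsub (Or.inr hx)) u

lemma body_ball (w : Eu n) {R : ℝ} (hR : ‖w‖ < R) : Body (Metric.closedBall w R) := by
  refine ⟨isCompact_closedBall _ _, convex_closedBall _ _, ?_⟩
  apply interior_mono Metric.ball_subset_closedBall
  rw [Metric.isOpen_ball.interior_eq]
  simpa using hR

lemma supp_ball (w : Eu n) {R : ℝ} (hR : ‖w‖ < R) (u : Eu n) :
    suppFn (Metric.closedBall w R) u = ⟪w, u⟫ + R * ‖u‖ := by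
  have hb := body_ball w hR
  have hR0 : 0 ≤ R := (norm_nonneg w).trans hR.le
  apply le_antisymm
  · apply hb.supp_le
    intro x hx
    have h1 : ⟪x, u⟫ = ⟪w, u⟫ + ⟪x - w, u⟫ := by rw [← inner_add_left]; congr 1; abel
    rw [h1]
    gcongr
    refine (real_inner_le_norm _ _).trans ?_
    gcongr
    simpa [dist_eq_norm] using hx
  · by_cases hu : u = 0
    · simp [hu, hb.supp_zero]
    have hn : ‖u‖ ≠ 0 := norm_ne_zero_iff.2 hu
    have hx : w + (R / ‖u‖) • u ∈ Metric.closedBall w R := by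
      rw [mem_closedBall_iff_norm, add_sub_cancel_left, norm_smul,
        Real.norm_of_nonneg (by positivity), div_mul_cancel₀ _ hn]
    have := hb.le_supp hx u
    rw [inner_add_left, real_inner_smul_left, real_inner_self_eq_norm_sq] at this
    have e : R / ‖u‖ * ‖u‖ ^ 2 = R * ‖u‖ := by field_simp
    rwa [e] at this

lemma Body.Wu_supp (h : Body M) : Wu (suppFn M) = M := by
  apply Subset.antisymm
  · intro x hx
    by_contra hxM
    obtain ⟨φ, a, h1, h2⟩ := geometric_hahn_banach_closed_point h.conv h.comp.isClosed hxM
    set w := (InnerProductSpace.toDual ℝ (Eu n)).symm φ with hw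
    have hφ : ∀ y, φ y = ⟪y, w⟫ := by
      intro y
      rw [real_inner_comm, hw, InnerProductSpace.toDual_symm_apply]
    have ha : 0 < a := by simpa using h1 0 h.zero
    have hw0 : w ≠ 0 := by
      intro h0
      rw [hφ, h0, inner_zero_right] at h2
      linarith
    have hn : 0 < ‖w‖ := norm_pos_iff.2 hw0
    simp only [Wu, mem_iInter, mem_ofPred_eq] at hx
    have h3 := hx (‖w‖⁻¹ • w) (by
      rw [mem_sphere_zero_iff_norm, norm_smul, norm_inv, norm_norm, inv_mul_cancel₀ hn.ne'])
    rw [real_inner_smul_right, h.supp_smul _ (by positivity)] at h3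
    have h4 := le_of_mul_le_mul_left h3 (by positivity)
    have h5 : suppFn M w ≤ a := h.supp_le fun y hy => by rw [← hφ]; exact (h1 y hy).le
    rw [hφ] at h2
    linarith
  · intro x hx
    simp only [Wu, mem_iInter, mem_ofPred_eq]
    intro u _
    exact h.le_supp hx u

lemma Body.good (h : Body M) (hn : 0 < n) : ∃ c C, Good (suppFn M) c C := by
  obtain ⟨c, C, D, hF⟩ := exists_fam hn (fun _ => suppFn M) (fun _ _ => 0)
    (h.supp_cont.comp continuous_snd).continuousOn continuousOn_const
    (fun l _ u _ => hasDerivWithinAt_const _ _ _)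
    (fun l _ u hu => h.supp_pos (sphere_sub hu))
  exact ⟨c, C, hF.good 0 (by simp)⟩

variable {f : Eu n → ℝ} {c C : ℝ}

lemma Good.body (h : Good f c C) : Body (Wu f) := by
  refine ⟨?_, ?_, ?_⟩
  · apply Metric.isCompact_of_isClosed_isBounded
    · rw [h.Wu_eq]
      exact isClosed_le h.Ga_cont continuous_const
    · exact Metric.isBounded_closedBall.subset h.Wu_closed_bdd
  · rw [h.Wu_eq]
    intro x hx y hy a b ha hb hab
    have hx : Ga f x ≤ 1 := hx
    have hy : Ga f y ≤ 1 := hy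
    show Ga f (a • x + b • y) ≤ 1
    refine (h.Ga_add _ _).trans ?_
    rw [h.Ga_smul _ ha, h.Ga_smul _ hb]
    nlinarith
  · apply interior_mono (Metric.ball_subset_closedBall.trans h.ball_sub)
    rw [Metric.isOpen_ball.interior_eq]
    exact Metric.mem_ball_self h.cpos

lemma Ga_eq_of_Wu {g : Eu n → ℝ} {c' C' : ℝ} (h : Good f c C) (h' : Good g c' C')
    (hW : Wu f = Wu g) : Ga f = Ga g := by
  have aux : ∀ {f g : Eu n → ℝ} {c C c' C' : ℝ}, Good f c C → Good g c' C' → Wu f = Wu g →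
      ∀ x, Ga g x ≤ Ga f x := by
    intro f g c C c' C' h h' hW x
    by_cases hx : x = 0
    · have h1 := h.Ga_smul 0 (s := 0) le_rfl
      have h2 := h'.Ga_smul 0 (s := 0) le_rfl
      simp only [smul_zero, zero_mul] at h1 h2
      rw [hx, h1, h2]
    · have hp := h.Ga_pos hx
      have : (Ga f x)⁻¹ • x ∈ Wu g := by
        rw [← hW, h.mem_Wu, h.Ga_smul _ (inv_nonneg.2 hp.le), inv_mul_cancel₀ hp.ne']
      rwa [h'.mem_Wu, h'.Ga_smul _ (inv_nonneg.2 hp.le), inv_mul_le_iff₀ hp, mul_one] at this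
  ext x
  exact le_antisymm (aux h' h hW.symm x) (aux h h' hW x)

lemma Jf_eq_of_Wu {g : Eu n → ℝ} {c' C' : ℝ} (h : Good f c C) (h' : Good g c' C')
    (hW : Wu f = Wu g) (φ : Eu n → ℝ) : Jf f φ = Jf g φ := by
  have hG := Ga_eq_of_Wu h h' hW
  have hnu : nu f = nu g := by ext1 x; simp only [nu, hG]
  unfold Jf
  congr 1
  apply integral_congr_ae
  filter_upwards [h.ae_diff] with x hx
  obtain ⟨a1, a2⟩ := h.nu_spec hx.2
  obtain ⟨b1, b2⟩ := h'.nu_spec (hG ▸ hx.2)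
  rw [← hnu] at b1 b2
  have p1 := h.pos a1
  have p2 := h'.pos b1
  have p3 := h.Ga_pos hx.1
  have e : f (nu f x) = g (nu f x) := by
    rw [← hG] at b2
    have q1 := (eq_div_iff p1.ne').1 a2
    have q2 := (eq_div_iff p2.ne').1 b2
    exact mul_left_cancel₀ p3.ne' (q1.trans q2.symm)
  simp only [← hG, ← hnu, ← e]

lemma Jf_supp (h : Good f c C) {a : ℝ} {M : Set (Eu n)} (hM : Body M)
    (hder : HasDerivWithinAt (fun t => (volume (Wu f + t • M)).toReal) a (Ici (0 : ℝ)) 0) :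
    a = Jf f (suppFn M) := by
  have hB := h.body
  obtain ⟨c', C', hg⟩ := hB.good h.npos
  obtain ⟨c1, C1, D1, hF⟩ := exists_fam h.npos (fun t u => suppFn (Wu f) u + t * suppFn M u)
    (fun _ u => suppFn M u) (by
      have := hB.supp_cont
      have := hM.supp_cont
      fun_prop) ((hM.supp_cont.comp continuous_snd).continuousOn) (by
      intro l _ u _
      have := (((hasDerivAt_id l).mul_const (suppFn M u)).const_add
        (suppFn (Wu f) u)).hasDerivWithinAt (s := Icc 0 1)
      rw [one_mul] at this
      exact this) (by
      intro l hl u hu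
      have := hB.supp_pos (sphere_sub hu)
      have := hM.supp_pos (sphere_sub hu)
      have := hl.1
      positivity)
  have h0 : (0 : ℝ) ∈ Icc (0 : ℝ) 1 := by simp
  have hd := hF.vol_der h0
  have hW : ∀ t ∈ Icc (0 : ℝ) 1,
      Wu (fun u => suppFn (Wu f) u + t * suppFn M u) = Wu f + t • M := by
    intro t ht
    rw [← (hB.add_smul hM ht.1).Wu_supp]
    congr 1
    ext u
    rw [hB.supp_add_smul hM ht.1]
  have hd2 : HasDerivWithinAt (fun t : ℝ => (volume (Wu f + t • M)).toReal)
      (Jf (fun u => suppFn (Wu f) u + 0 * suppFn M u) (suppFn M)) (Icc 0 1) 0 := by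
    refine hd.congr (fun t ht => ?_) ?_
    · rw [hW t ht]
    · rw [hW 0 h0]
  have hd3 := hder.mono (Icc_subset_Ici_self : Icc (0 : ℝ) 1 ⊆ Ici 0)
  have := UniqueDiffWithinAt.eq_deriv _ (uniqueDiffOn_Icc zero_lt_one 0 h0) hd3 hd2
  rw [this]
  apply Jf_eq_of_Wu (hF.good 0 h0) h
  rw [hW 0 h0, zero_smul_set hM.ne, add_zero]

lemma Jf_integrable (h : Good f c C) {φ : Eu n → ℝ} (hφ : ContinuousOn φ {0}ᶜ) :
    Integrable (fun x => Real.exp (-Ga f x) * Ga f x * (φ (nu f x) / f (nu f x))) := by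
  obtain ⟨D, hD⟩ := (isCompact_sphere (0 : Eu n) 1).exists_bound_of_continuousOn
    (hφ.mono sphere_sub)
  have hcC := h.Cpos
  have hc := h.cpos
  refine ((integrable_bound h.npos (inv_pos.2 hcC)).const_mul (D / c ^ 2)).mono' ?_ ?_
  · have m1 := (measurable_of_continuousOn_compl_singleton 0 h.cont).comp (nu_meas (f := f))
    have m2 := (measurable_of_continuousOn_compl_singleton 0 hφ).comp (nu_meas (f := f))
    have m3 := h.Ga_cont.measurable
    exact ((m3.neg.exp.mul m3).mul (m2.div m1)).aestronglyMeasurable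
  · filter_upwards [h.ae_diff] with x hx
    obtain ⟨hν, -⟩ := h.nu_spec hx.2
    have b1 := h.Ga_upper x
    have b2 := h.Ga_lower x
    have b3 := hD _ hν
    have b4 := h.lb _ hν
    have b5 := h.Ga_nonneg x
    have b6 := (h.pos hν).le
    rw [norm_mul, norm_mul, Real.norm_of_nonneg (Real.exp_pos _).le, Real.norm_of_nonneg b5,
      norm_div, Real.norm_of_nonneg b6]
    have b7 : 0 ≤ D := (norm_nonneg _).trans b3
    calc _ ≤ Real.exp (-(‖x‖ / C)) * (‖x‖ / c) * (D / c) := by gcongr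
      _ = _ := by rw [← div_eq_inv_mul]; field_simp

lemma Jf_sub (h : Good f c C) {φ ψ : Eu n → ℝ} (hφ : ContinuousOn φ {0}ᶜ)
    (hψ : ContinuousOn ψ {0}ᶜ) : Jf f (fun x => φ x - ψ x) = Jf f φ - Jf f ψ := by
  unfold Jf
  rw [← mul_sub, ← integral_sub (Jf_integrable h hφ) (Jf_integrable h hψ)]
  congr 2
  ext x
  ring

lemma Jf_abs_le (h : Good f c C) {φ ψ : Eu n → ℝ} {ε : ℝ}
    (hψ : ContinuousOn ψ {0}ᶜ) (hle : ∀ u ∈ Metric.sphere (0 : Eu n) 1, |φ u| ≤ ε * ψ u) :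
    |Jf f φ| ≤ ε * Jf f ψ := by
  unfold Jf
  rw [abs_mul, abs_of_nonneg (by positivity), mul_left_comm]
  gcongr
  rw [← integral_const_mul, ← Real.norm_eq_abs]
  apply norm_integral_le_of_norm_le ((Jf_integrable h hψ).const_mul ε)
  filter_upwards [h.ae_diff] with x hx
  obtain ⟨hν, -⟩ := h.nu_spec hx.2
  have b5 := h.Ga_nonneg x
  have b6 := h.pos hν
  rw [norm_mul, norm_mul, Real.norm_of_nonneg (Real.exp_pos _).le, Real.norm_of_nonneg b5,
    norm_div, Real.norm_of_nonneg b6.le, Real.norm_eq_abs, mul_left_comm, ← mul_div_assoc ε]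
  have := hle _ hν
  gcongr

lemma Jf_pos (h : Good f c C) {φ : Eu n → ℝ} (hφ : ContinuousOn φ {0}ᶜ)
    (hp : ∀ u ∈ Metric.sphere (0 : Eu n) 1, 0 < φ u) : 0 < Jf f φ := by
  have : Nonempty (Fin n) := ⟨⟨0, h.npos⟩⟩
  unfold Jf
  have hae : ∀ᵐ x : Eu n, 0 < Real.exp (-Ga f x) * Ga f x * (φ (nu f x) / f (nu f x)) := by
    filter_upwards [h.ae_diff] with x hx
    obtain ⟨hν, -⟩ := h.nu_spec hx.2
    have := h.Ga_pos hx.1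
    have := h.pos hν
    have := hp _ hν
    positivity
  apply mul_pos (by positivity)
  have hnn := hae.mono fun x hx => hx.le
  refine lt_of_le_of_ne (integral_nonneg_of_ae hnn) fun h0 => ?_
  have := (integral_eq_zero_iff_of_nonneg_ae hnn (Jf_integrable h hφ)).1 h0.symm
  obtain ⟨x, hx1, hx2⟩ := (hae.and this).exists
  exact hx1.ne' hx2

lemma dense_supp {φ : Eu n → ℝ} (hφ : ContinuousOn φ {0}ᶜ) {ε : ℝ} (hε : 0 < ε) :
    ∃ M N : Set (Eu n), Body M ∧ Body N ∧ ∀ u ∈ Metric.sphere (0 : Eu n) 1,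
      |φ u - (suppFn M u - suppFn N u)| ≤ ε := by
  let X := Metric.sphere (0 : Eu n) 1
  let Ls : Set C(X, ℝ) := {F | ∃ M N : Set (Eu n), Body M ∧ Body N ∧
    ∀ u : X, F u = suppFn M u - suppFn N u}
  have hsep : Ls.SeparatesPointsStrongly := by
    intro v x y
    let w : Eu n := ((v x - v y) / ‖(x : Eu n) - y‖ ^ 2) • ((x : Eu n) - y)
    let a : ℝ := v x - ⟪w, (x : Eu n)⟫
    let R : ℝ := ‖w‖ + |a| + 1
    have hR1 : ‖w‖ < R := by
      have := abs_nonneg a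
      simp only [R]; linarith
    have hR2 : ‖(0 : Eu n)‖ < R - a := by
      have := le_abs_self a
      have := norm_nonneg w
      simp only [R, norm_zero]; linarith
    refine ⟨⟨fun u => ⟪w, (u : Eu n)⟫ + a, by fun_prop⟩,
      ⟨_, _, body_ball w hR1, body_ball 0 hR2, ?_⟩, ?_, ?_⟩
    · intro u
      rw [supp_ball w hR1, supp_ball 0 hR2, mem_sphere_zero_iff_norm.1 u.2]
      simp only [ContinuousMap.coe_mk, inner_zero_left]
      ring
    · simp [a]
    · simp only [ContinuousMap.coe_mk, a]
      by_cases hxy : x = y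
      · subst hxy; ring
      have hne : ‖(x : Eu n) - y‖ ≠ 0 := by
        rw [norm_ne_zero_iff, sub_ne_zero]
        exact fun h => hxy (Subtype.ext h)
      have : ⟪w, (x : Eu n)⟫ - ⟪w, (y : Eu n)⟫ = v x - v y := by
        rw [← inner_sub_right]
        simp only [w]
        rw [real_inner_smul_left, real_inner_self_eq_norm_sq]
        field_simp
      linarith
  have htop : closure Ls = ⊤ := by
    apply ContinuousMap.sublattice_closure_eq_top
    · have hb : ‖(0 : Eu n)‖ < 1 := by simp
      exact ⟨0, _, _, body_ball 0 hb, body_ball 0 hb, fun u => by simp⟩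
    · rintro F ⟨A, B, hA, hB, h1⟩ G ⟨A', B', hA', hB', h2⟩
      obtain ⟨P, hP, p⟩ := hA.add hA'
      obtain ⟨Q, hQ, q⟩ := hA'.add hB
      obtain ⟨Q', hQ', q'⟩ := hA.add hB'
      obtain ⟨Z, hZ, z⟩ := hQ.sup hQ'
      refine ⟨P, Z, hP, hZ, fun u => ?_⟩
      rw [ContinuousMap.inf_apply, h1, h2, p, z, q, q']
      rcases le_total (suppFn A u - suppFn B u) (suppFn A' u - suppFn B' u) with h | h
      · rw [inf_of_le_left h, max_eq_left (by linarith)]; ring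
      · rw [inf_of_le_right h, max_eq_right (by linarith)]; ring
    · rintro F ⟨A, B, hA, hB, h1⟩ G ⟨A', B', hA', hB', h2⟩
      obtain ⟨P, hP, p⟩ := hB.add hB'
      obtain ⟨Q, hQ, q⟩ := hA.add hB'
      obtain ⟨Q', hQ', q'⟩ := hA'.add hB
      obtain ⟨Z, hZ, z⟩ := hQ.sup hQ'
      refine ⟨Z, P, hZ, hP, fun u => ?_⟩
      rw [ContinuousMap.sup_apply, h1, h2, p, z, q, q']
      rcases le_total (suppFn A u - suppFn B u) (suppFn A' u - suppFn B' u) with h | h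
      · rw [sup_of_le_right h, max_eq_right (by linarith)]; ring
      · rw [sup_of_le_left h, max_eq_left (by linarith)]; ring
    · exact hsep
  let Φ : C(X, ℝ) := ⟨fun u => φ u, continuousOn_iff_continuous_domRestrict.1 (hφ.mono sphere_sub)⟩
  have hmem : Φ ∈ closure Ls := by rw [htop]; trivial
  obtain ⟨F, ⟨M, N, hM, hN, hF⟩, hd⟩ := Metric.mem_closure_iff.1 hmem ε hε
  refine ⟨M, N, hM, hN, fun u hu => ?_⟩
  have := (ContinuousMap.dist_apply_le_dist (f := Φ) (g := F) ⟨u, hu⟩).trans hd.le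
  rw [hF, Real.dist_eq] at this
  exact this

lemma hom_bound {φ : Eu n → ℝ} {a : ℝ} (hhom : ∀ s : ℝ, 0 < s → ∀ x, φ (s • x) = s * φ x)
    (h0 : φ 0 = 0) (hb : ∀ u ∈ Metric.sphere (0 : Eu n) 1, |φ u| ≤ a) (x : Eu n) :
    |φ x| ≤ a * ‖x‖ := by
  by_cases hx : x = 0
  · simp [hx, h0]
  have hn : 0 < ‖x‖ := norm_pos_iff.2 hx
  have hu : ‖x‖⁻¹ • x ∈ Metric.sphere (0 : Eu n) 1 := by
    rw [mem_sphere_zero_iff_norm, norm_smul, norm_inv, norm_norm, inv_mul_cancel₀ hn.ne']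
  have h1 := hb _ hu
  have h2 : φ x = ‖x‖ * φ (‖x‖⁻¹ • x) := by
    rw [hhom _ (inv_pos.2 hn), mul_inv_cancel_left₀ hn.ne']
  rw [h2, abs_mul, abs_of_pos hn, mul_comm]
  gcongr

lemma Jf_eq_integral (h : Good f c C) {μ : Measure (Eu n)}
    (hμ : ∀ M : Set (Eu n), Body M → ∫ x, suppFn M x ∂μ = Jf f (suppFn M))
    {φ : Eu n → ℝ} (hφ : ContinuousOn φ {0}ᶜ)
    (hhom : ∀ s : ℝ, 0 < s → ∀ x, φ (s • x) = s * φ x) (h0 : φ 0 = 0) :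
    Jf f φ = ∫ x, φ x ∂μ := by
  have hint : ∀ M : Set (Eu n), Body M → Integrable (suppFn M) μ := by
    intro M hM
    by_contra hni
    have h1 := hμ M hM
    rw [integral_undef hni] at h1
    have := Jf_pos h hM.supp_cont.continuousOn (fun u hu => hM.supp_pos (sphere_sub hu))
    linarith
  have hb1 : ‖(0 : Eu n)‖ < 1 := by simp
  have hball : suppFn (Metric.closedBall (0 : Eu n) 1) = fun u => ‖u‖ := by
    ext u; rw [supp_ball 0 hb1]; simp
  have hnint : Integrable (fun x : Eu n => ‖x‖) μ := by
    rw [← hball]; exact hint _ (body_ball 0 hb1)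
  have hnJ : ∫ x : Eu n, ‖x‖ ∂μ = Jf f (fun x => ‖x‖) := by
    rw [← hball]; exact hμ _ (body_ball 0 hb1)
  have hφint : Integrable φ μ := by
    obtain ⟨D, hD⟩ := (isCompact_sphere (0 : Eu n) 1).exists_bound_of_continuousOn
      (hφ.mono sphere_sub)
    exact (hnint.const_mul D).mono'
      (measurable_of_continuousOn_compl_singleton 0 hφ).aestronglyMeasurable
      (Filter.Eventually.of_forall fun x => hom_bound hhom h0 hD x)
  set A := ∫ x : Eu n, ‖x‖ ∂μ with hA
  have hA0 : 0 ≤ A := integral_nonneg fun x => norm_nonneg x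
  have key : ∀ ε : ℝ, 0 < ε → |Jf f φ - ∫ x, φ x ∂μ| ≤ 2 * A * ε := by
    intro ε hε
    obtain ⟨M, N, hM, hN, hMN⟩ := dense_supp hφ hε
    have cM := hM.supp_cont.continuousOn (s := {0}ᶜ)
    have cN := hN.supp_cont.continuousOn (s := {0}ᶜ)
    have j1 := Jf_abs_le h (φ := fun x => φ x - (suppFn M x - suppFn N x)) (ψ := fun x => ‖x‖)
      (ε := ε) (by fun_prop) (fun u hu => by
        rw [mem_sphere_zero_iff_norm.1 hu, mul_one]; exact hMN u hu)
    rw [Jf_sub (ψ := fun x => suppFn M x - suppFn N x) h hφ (cM.sub cN), Jf_sub h cM cN, ← hnJ, ← hμ M hM, ← hμ N hN] at j1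
    have j2 : |∫ x, (φ x - (suppFn M x - suppFn N x)) ∂μ| ≤ ε * A := by
      rw [hA, ← integral_const_mul, ← Real.norm_eq_abs]
      apply norm_integral_le_of_norm_le (hnint.const_mul ε)
      refine Filter.Eventually.of_forall fun x => ?_
      refine hom_bound (φ := fun x => φ x - (suppFn M x - suppFn N x)) ?_ ?_ hMN x
      · intro s hs x
        simp only [hhom s hs, hM.supp_smul _ hs.le, hN.supp_smul _ hs.le]
        ring
      · simp [h0, hM.supp_zero, hN.supp_zero]
    rw [integral_sub (g := fun x => suppFn M x - suppFn N x) hφint ((hint M hM).sub (hint N hN)),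
      integral_sub (hint M hM) (hint N hN)] at j2
    rw [abs_le] at j1 j2 ⊢
    constructor <;> linarith [j1.1, j1.2, j2.1, j2.2]
  have hz : |Jf f φ - ∫ x, φ x ∂μ| ≤ 0 := by
    apply le_of_forall_pos_le_add
    intro δ hδ
    have := key (δ / (2 * A + 1)) (by positivity)
    refine this.trans ?_
    rw [zero_add, ← mul_div_assoc, div_le_iff₀ (by positivity)]
    nlinarith
  exact sub_eq_zero.1 (abs_nonpos_iff.1 hz)

end supp

lemma master {n : ℕ} (hn : 0 < n) (p : ℝ) (K L : Set (Eu n)) (SS : ℝ → Measure (Eu n))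
    (hSS : ∀ lam ∈ Icc (0 : ℝ) 1, ∀ M : Set (Eu n),
      IsCompact M → Convex ℝ M → (0 : Eu n) ∈ interior M →
      HasDerivWithinAt (fun t => (volume (pComb p K L lam + t • M)).toReal)
        (∫ x, suppFn M x ∂(SS lam)) (Ici (0 : ℝ)) 0)
    (f' : ℝ → Eu n → ℝ)
    (cont : ContinuousOn (fun z : ℝ × Eu n => pMean p K L z.1 z.2) (Icc (0 : ℝ) 1 ×ˢ {0}ᶜ))
    (cont' : ContinuousOn (fun z : ℝ × Eu n => f' z.1 z.2) (Icc (0 : ℝ) 1 ×ˢ {0}ᶜ))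
    (der : ∀ l ∈ Icc (0 : ℝ) 1, ∀ u ∈ Metric.sphere (0 : Eu n) 1,
      HasDerivWithinAt (fun l => pMean p K L l u) (f' l u) (Icc 0 1) l)
    (pos : ∀ l ∈ Icc (0 : ℝ) 1, ∀ u ∈ Metric.sphere (0 : Eu n) 1, 0 < pMean p K L l u)
    (hom : ∀ l ∈ Icc (0 : ℝ) 1, ∀ s : ℝ, 0 < s → ∀ x, f' l (s • x) = s * f' l x)
    (zero : ∀ l ∈ Icc (0 : ℝ) 1, f' l 0 = 0) :
    (∀ lam ∈ Icc (0 : ℝ) 1,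
      HasDerivWithinAt (fun l => (volume (pComb p K L l)).toReal)
        (∫ x, f' lam x ∂(SS lam)) (Icc (0 : ℝ) 1) lam) ∧
    ContinuousOn
      (fun lam => derivWithin (fun l => (volume (pComb p K L l)).toReal)
        (Icc (0 : ℝ) 1) lam) (Icc (0 : ℝ) 1) := by
  obtain ⟨c, C, D, hF⟩ := exists_fam hn (pMean p K L) f' cont cont' der pos
  have hd : ∀ l ∈ Icc (0 : ℝ) 1, HasDerivWithinAt (fun l => (volume (pComb p K L l)).toReal)
      (Jf (pMean p K L l) (f' l)) (Icc (0 : ℝ) 1) l := fun l hl => hF.vol_der hl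
  refine ⟨fun l hl => ?_, ?_⟩
  · have := Jf_eq_integral (hF.good l hl) (μ := SS l)
      (fun M hM => Jf_supp (hF.good l hl) hM (hSS l hl M hM.comp hM.conv hM.int))
      (φ := f' l) (cont'.comp (f := fun u : Eu n => (l, u)) (by fun_prop)
        (fun u hu => ⟨hl, hu⟩)) (hom l hl) (zero l hl)
    rw [← this]
    exact hd l hl
  · refine hF.J_cont.congr fun l hl => ?_
    exact (hd l hl).derivWithin (uniqueDiffOn_Icc zero_lt_one l hl)

/-- `λ ↦ vol((1-λ)K +ₚ λL)` is continuously differentiable on `[0,1]`,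
with the stated integral formula for the derivative against the surface area measure
`S_{K_λ}` (characterized here by `(d/dt)|₀⁺ vol(K_λ + tM) = ∫ h_M dS_{K_λ}`). -/
theorem vol_pComb_contDiff (n : ℕ) (hn : 0 < n) (p : ℝ) (hp0 : 0 ≤ p) (hp1 : p < 1)
    (K L : Set (EuclideanSpace ℝ (Fin n)))
    (hKc : IsCompact K) (hKv : Convex ℝ K)
    (hK0 : (0 : EuclideanSpace ℝ (Fin n)) ∈ interior K)
    (hLc : IsCompact L) (hLv : Convex ℝ L)
    (hL0 : (0 : EuclideanSpace ℝ (Fin n)) ∈ interior L)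
    (SS : ℝ → Measure (EuclideanSpace ℝ (Fin n)))
    (hSS : ∀ lam ∈ Icc (0 : ℝ) 1, ∀ M : Set (EuclideanSpace ℝ (Fin n)),
      IsCompact M → Convex ℝ M → (0 : EuclideanSpace ℝ (Fin n)) ∈ interior M →
      HasDerivWithinAt (fun t => (volume (pComb p K L lam + t • M)).toReal)
        (∫ x, suppFn M x ∂(SS lam)) (Ici (0 : ℝ)) 0) :
    (0 < p → ∀ lam ∈ Icc (0 : ℝ) 1,
      HasDerivWithinAt (fun l => (volume (pComb p K L l)).toReal)
        (∫ x, ((suppFn L x ^ p - suppFn K x ^ p) / p)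
          * ((1 - lam) * suppFn K x ^ p + lam * suppFn L x ^ p) ^ ((1 - p) / p)
          ∂(SS lam)) (Icc (0 : ℝ) 1) lam) ∧
    (p = 0 → ∀ lam ∈ Icc (0 : ℝ) 1,
      HasDerivWithinAt (fun l => (volume (pComb p K L l)).toReal)
        (∫ x, suppFn K x ^ (1 - lam) * suppFn L x ^ lam
          * Real.log (suppFn L x / suppFn K x) ∂(SS lam)) (Icc (0 : ℝ) 1) lam) ∧
    ContinuousOn
      (fun lam => derivWithin (fun l => (volume (pComb p K L l)).toReal)
        (Icc (0 : ℝ) 1) lam) (Icc (0 : ℝ) 1) := by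
  have hK : Body K := ⟨hKc, hKv, hK0⟩
  have hL : Body L := ⟨hLc, hLv, hL0⟩
  have cK := hK.supp_cont
  have cL := hL.supp_cont
  rcases hp0.eq_or_lt with hp | hp
  · subst hp
    have hm : ∀ l u, pMean 0 K L l u = suppFn K u ^ (1 - l) * suppFn L u ^ l := by
      intro l u; simp [pMean]
    obtain ⟨h1, h2⟩ := master hn 0 K L SS hSS
      (fun l x => suppFn K x ^ (1 - l) * suppFn L x ^ l * Real.log (suppFn L x / suppFn K x))
      (by
        simp only [hm]
        intro z hz
        have k1 := hK.supp_pos hz.2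
        have k2 := hL.supp_pos hz.2
        apply ContinuousAt.continuousWithinAt
        apply ContinuousAt.mul
        · exact ContinuousAt.rpow (by fun_prop) (by fun_prop) (Or.inl k1.ne')
        · exact ContinuousAt.rpow (by fun_prop) (by fun_prop) (Or.inl k2.ne'))
      (by
        intro z hz
        have k1 := hK.supp_pos hz.2
        have k2 := hL.supp_pos hz.2
        apply ContinuousAt.continuousWithinAt
        apply ContinuousAt.mul
        · apply ContinuousAt.mul
          · exact ContinuousAt.rpow (by fun_prop) (by fun_prop) (Or.inl k1.ne')
          · exact ContinuousAt.rpow (by fun_prop) (by fun_prop) (Or.inl k2.ne')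
        · refine ContinuousAt.log (ContinuousAt.div (by fun_prop) (by fun_prop) k1.ne') ?_
          exact (div_pos k2 k1).ne')
      (by
        intro l hl u hu
        simp only [hm]
        have k1 := hK.supp_pos (sphere_sub hu)
        have k2 := hL.supp_pos (sphere_sub hu)
        have d1 := ((hasDerivAt_id l).const_sub 1).const_rpow k1
        have d2 := (hasDerivAt_id l).const_rpow k2
        have d := (d1.mul d2).hasDerivWithinAt (s := Icc 0 1)
        rw [Real.log_div k2.ne' k1.ne']
        refine d.congr_deriv ?_
        simp only [id]
        ring)
      (by
        intro l hl u hu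
        rw [hm]
        have k1 := hK.supp_pos (sphere_sub hu)
        have k2 := hL.supp_pos (sphere_sub hu)
        positivity)
      (by
        intro l hl s hs x
        by_cases hx : x = 0
        · simp [hx, hK.supp_zero, hL.supp_zero]
        have k1 := hK.supp_pos hx
        have k2 := hL.supp_pos hx
        simp only [hK.supp_smul _ hs.le, hL.supp_smul _ hs.le]
        rw [mul_div_mul_left _ _ hs.ne', Real.mul_rpow hs.le k1.le, Real.mul_rpow hs.le k2.le]
        have : s ^ (1 - l) * s ^ l = s := by
          rw [← Real.rpow_add hs]; simp
        calc _ = (s ^ (1 - l) * s ^ l) * (suppFn K x ^ (1 - l) * suppFn L x ^ l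
              * Real.log (suppFn L x / suppFn K x)) := by ring
          _ = _ := by rw [this])
      (by intro l hl; simp [hK.supp_zero, hL.supp_zero])
    exact ⟨fun h => absurd h (lt_irrefl _), fun _ => h1, h2⟩
  · have hm : ∀ l u, pMean p K L l u
        = ((1 - l) * suppFn K u ^ p + l * suppFn L u ^ p) ^ (1 / p) := by
      intro l u; simp [pMean, hp.ne']
    have hpos : ∀ l ∈ Icc (0 : ℝ) 1, ∀ u : Eu n, u ≠ 0 →
        0 < (1 - l) * suppFn K u ^ p + l * suppFn L u ^ p := by
      intro l hl u hu
      have k1 := Real.rpow_pos_of_pos (hK.supp_pos hu) p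
      have k2 := Real.rpow_pos_of_pos (hL.supp_pos hu) p
      rcases hl.1.eq_or_lt with h | h
      · rw [← h]; simpa using k1
      · have := mul_pos h k2
        have := mul_nonneg (sub_nonneg.2 hl.2) k1.le
        linarith
    have cKp : Continuous fun x => suppFn K x ^ p := cK.rpow_const fun x => Or.inr hp.le
    have cLp : Continuous fun x => suppFn L x ^ p := cL.rpow_const fun x => Or.inr hp.le
    obtain ⟨h1, h2⟩ := master hn p K L SS hSS
      (fun l x => ((suppFn L x ^ p - suppFn K x ^ p) / p)
          * ((1 - l) * suppFn K x ^ p + l * suppFn L x ^ p) ^ ((1 - p) / p))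
      (by
        simp only [hm]
        intro z hz
        apply ContinuousAt.continuousWithinAt
        exact ContinuousAt.rpow (by fun_prop) (by fun_prop)
          (Or.inl (hpos z.1 hz.1 z.2 hz.2).ne'))
      (by
        intro z hz
        apply ContinuousAt.continuousWithinAt
        apply ContinuousAt.mul (by fun_prop)
        exact ContinuousAt.rpow (by fun_prop) (by fun_prop)
          (Or.inl (hpos z.1 hz.1 z.2 hz.2).ne'))
      (by
        intro l hl u hu
        simp only [hm]
        have k := hpos l hl u (sphere_sub hu)
        have d0 := (((hasDerivAt_id l).const_sub 1).mul_const (suppFn K u ^ p)).add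
          ((hasDerivAt_id l).mul_const (suppFn L u ^ p))
        have d := (d0.rpow_const (p := 1 / p) (Or.inl k.ne')).hasDerivWithinAt (s := Icc 0 1)
        refine d.congr_deriv ?_
        have e : 1 / p - 1 = (1 - p) / p := by field_simp
        simp only [e, id, Pi.add_apply]
        ring)
      (by
        intro l hl u hu
        rw [hm]
        exact Real.rpow_pos_of_pos (hpos l hl u (sphere_sub hu)) _)
      (by
        intro l hl s hs x
        by_cases hx : x = 0
        · simp [hx, hK.supp_zero, hL.supp_zero]
        have k1 := hK.supp_pos hx
        have k2 := hL.supp_pos hx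
        have k := hpos l hl x hx
        have hsp := Real.rpow_pos_of_pos hs p
        simp only [hK.supp_smul _ hs.le, hL.supp_smul _ hs.le]
        rw [Real.mul_rpow hs.le k1.le, Real.mul_rpow hs.le k2.le]
        have e1 : (1 - l) * (s ^ p * suppFn K x ^ p) + l * (s ^ p * suppFn L x ^ p)
          = s ^ p * ((1 - l) * suppFn K x ^ p + l * suppFn L x ^ p) := by ring
        rw [e1, Real.mul_rpow hsp.le k.le, ← Real.rpow_mul hs.le, mul_div_cancel₀ _ hp.ne']
        have : s ^ p * s ^ (1 - p) = s := by
          rw [← Real.rpow_add hs]; simp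
        calc _ = (s ^ p * s ^ (1 - p)) * (((suppFn L x ^ p - suppFn K x ^ p) / p)
              * ((1 - l) * suppFn K x ^ p + l * suppFn L x ^ p) ^ ((1 - p) / p)) := by ring
          _ = _ := by rw [this])
      (by intro l hl; simp [hK.supp_zero, hL.supp_zero])
    exact ⟨fun _ => h1, fun h => absurd h hp.ne', h2⟩
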